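/- Let k be a field, V a finite-dimensional k-vector space, and (F^q)_{q∈ℤ} a monotone increasing family of k-subspaces of V. Regard W = k[x,x⁻¹] ⊗_k V as a module over the polynomial ring k[x] via the inclusion k[x] ⊆ k[x,x⁻¹], and let Rees(F) ⊆ W be the k[x]-submodule generated by all elements x^q ⊗ v with q ∈ ℤ and v ∈ F^q. For a linear functional α ∈ V* and an integer p, let α̃_p : W → k[x,x⁻¹] be the k[x,x⁻¹]-linear map determined by f ⊗ v ↦ x^p · f · α(v). Then α̃_p maps Rees(F) into the subring k[x] if and only if α annihilates F^q for every integer q < −p; equivalently (using monotonicity), if and only if α lies in the dual annihilator of F^{−p−1}. -/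

import Mathlib

open Polynomial LaurentPolynomial TensorProduct

/-- The algebra maps `k → k[x] → k[x,x⁻¹]` form a scalar tower. -/
instance laurentTower (k : Type*) [CommRing k] :
    IsScalarTower k (Polynomial k) (LaurentPolynomial k) :=
  IsScalarTower.of_algebraMap_eq fun c => by
    simp [algebraMap_eq_toLaurent, Polynomial.algebraMap_apply]

theorem C_mul_T_mem_range_toLaurent {k : Type*} [Field k] (a : k) (n : ℤ) :
    (LaurentPolynomial.C a * LaurentPolynomial.T n ∈
      Set.range (Polynomial.toLaurent : Polynomial k →+* LaurentPolynomial k)) ↔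
      (n < 0 → a = 0) := by
  constructor
  · rintro ⟨f, hf⟩ hn
    have h1 := Polynomial.trunc_toLaurent f
    rw [hf, LaurentPolynomial.trunc_C_mul_T, if_neg (not_le.mpr hn)] at h1
    rw [← h1, map_zero] at hf
    have h2 := congrArg (fun g => g * LaurentPolynomial.T (-n)) hf
    simp only [zero_mul, LaurentPolynomial.mul_T_assoc, add_neg_cancel,
      LaurentPolynomial.T_zero, mul_one] at h2
    have h3 := congrArg (fun g : LaurentPolynomial k => g.coeff 0) h2
    simpa using h3.symm
  · intro h
    by_cases hn : n < 0
    · exact ⟨0, by simp [h hn]⟩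
    · obtain ⟨m, rfl⟩ := Int.eq_ofNat_of_zero_le (not_lt.mp hn)
      exact ⟨Polynomial.C a * Polynomial.X ^ m, Polynomial.toLaurent_C_mul_X_pow m a⟩

/-- Let `k` be a field, `V` a finite-dimensional `k`-vector space and
`(F q)_{q ∈ ℤ}` a monotone increasing family of subspaces of `V`.  Let
`W = k[x,x⁻¹] ⊗[k] V`, regarded as a `k[x]`-module, and let `Rees ⊆ W` be the
`k[x]`-submodule generated by the elements `x^q ⊗ v` with `v ∈ F q`.  For
`α ∈ V*` and `p ∈ ℤ`, let `αt : W → k[x,x⁻¹]` be the `k[x,x⁻¹]`-linear map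
determined by `f ⊗ v ↦ x^p * f * α v`.  Then `αt` maps `Rees` into (the image of)
`k[x]` iff `α` annihilates `F q` for every `q < -p`; equivalently, iff `α` lies in
the dual annihilator of `F (-p-1)`. -/
theorem rees_dual_filtration_field
    (k : Type*) [Field k] (V : Type*) [AddCommGroup V] [Module k V]
    [FiniteDimensional k V]
    (F : ℤ → Subspace k V) (hF : Monotone F)
    (α : Module.Dual k V) (p : ℤ)
    (αt : (LaurentPolynomial k ⊗[k] V) →ₗ[LaurentPolynomial k] LaurentPolynomial k)
    (hαt : ∀ (f : LaurentPolynomial k) (v : V),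
      αt (f ⊗ₜ[k] v) = LaurentPolynomial.T p * f * algebraMap k (LaurentPolynomial k) (α v))
    (Rees : Submodule (Polynomial k) (LaurentPolynomial k ⊗[k] V))
    (hRees : Rees = Submodule.span (Polynomial k)
      { w : LaurentPolynomial k ⊗[k] V |
        ∃ q : ℤ, ∃ v ∈ F q, w = LaurentPolynomial.T q ⊗ₜ[k] v }) :
    ((∀ w ∈ Rees, αt w ∈
        Set.range (Polynomial.toLaurent : Polynomial k →+* LaurentPolynomial k)) ↔
      (∀ q : ℤ, q < -p → F q ≤ LinearMap.ker α)) ∧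
    ((∀ w ∈ Rees, αt w ∈
        Set.range (Polynomial.toLaurent : Polynomial k →+* LaurentPolynomial k)) ↔
      α ∈ Submodule.dualAnnihilator (F (-p - 1))) := by
  have key : ∀ (q : ℤ) (v : V), αt (LaurentPolynomial.T q ⊗ₜ[k] v) =
      LaurentPolynomial.C (α v) * LaurentPolynomial.T (p + q) := by
    intro q v
    rw [hαt, ← LaurentPolynomial.T_add, LaurentPolynomial.C_eq_algebraMap, mul_comm]
  have main : (∀ w ∈ Rees, αt w ∈
        Set.range (Polynomial.toLaurent : Polynomial k →+* LaurentPolynomial k)) ↔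
      (∀ q : ℤ, q < -p → F q ≤ LinearMap.ker α) := by
    constructor
    · intro h q hq v hv
      have h1 := h (LaurentPolynomial.T q ⊗ₜ[k] v)
        (by rw [hRees]; exact Submodule.subset_span ⟨q, v, hv, rfl⟩)
      rw [key, C_mul_T_mem_range_toLaurent] at h1
      exact h1 (by omega)
    · intro h w hw
      rw [hRees] at hw
      induction hw using Submodule.span_induction with
      | mem x hx =>
        obtain ⟨q, v, hv, rfl⟩ := hx
        rw [key, C_mul_T_mem_range_toLaurent]
        intro hn
        exact h q (by omega) hv
      | zero => exact ⟨0, by simp⟩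
      | add x y _ _ hx hy =>
        obtain ⟨f, hf⟩ := hx
        obtain ⟨g, hg⟩ := hy
        exact ⟨f + g, by rw [map_add, map_add, hf, hg]⟩
      | smul a x _ hx =>
        obtain ⟨f, hf⟩ := hx
        refine ⟨a * f, ?_⟩
        rw [← algebraMap_smul (LaurentPolynomial k) a x, map_smul, ← hf, map_mul,
          LaurentPolynomial.algebraMap_eq_toLaurent, smul_eq_mul]
  refine ⟨main, main.trans ?_⟩
  rw [Submodule.mem_dualAnnihilator]
  constructor
  · intro h v hv
    exact h (-p - 1) (by omega) hv
  · intro h q hq v hv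
    exact h v (hF (by omega : q ≤ -p - 1) hv)
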